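/- arXiv:1705.06372 — 3 statements merged into one kernel-verified Lean document; each statement's English description precedes it below -/
import Mathlib

section
/- Let q = 2^h with h ≥ 4 and let A be the point set of PG(2,q) produced by the q/8-construction from F_2-independent α₁, α₂, α₃ ∈ F_q \ {0} and β₁, β₂, β₃ ∈ F_q \ {0} with Tr(α_i β_j) = δ_ij. If q > 16, then A is a KM-arc of type q/8 in PG(2,q) whose q/8-nucleus is (0:0:1) and which is an elation KM-arc with elation line X = 0 (for every α ∈ F_q the set {z : (1:α:z) ∈ A} is empty or a coset of S). If q = 16, then A is a hyperoval of PG(2,16), i.e. a set of 18 points meeting every line in 0 or 2 points, stabilised by a non-trivial elation with axis X = 0. -/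
open scoped Classical

noncomputable section

variable {K : Type*} [Field K]

/-- The absolute trace-style sum `x + x² + x⁴ + ⋯ + x^(2^(h-1))`
(it lands in the prime subfield `F₂` when `|K| = 2^h`). -/
def Tr (h : ℕ) (x : K) : K := ∑ i ∈ Finset.range h, x ^ 2 ^ i

/-- `F₂`-independence of a tuple of elements of a field of characteristic two:
no nontrivial combination with coefficients `0`/`1` vanishes. -/
def F2Indep {n : ℕ} (v : Fin n → K) : Prop :=
  ∀ c : Fin n → K, (∀ i, c i = 0 ∨ c i = 1) → ∑ i, c i * v i = 0 → ∀ i, c i = 0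

/-- The `F₂`-span of a tuple of elements of a field of characteristic two. -/
def F2Span {n : ℕ} (v : Fin n → K) : Set K :=
  {x | ∃ c : Fin n → K, (∀ i, c i = 0 ∨ c i = 1) ∧ x = ∑ i, c i * v i}

/-- `α·S` for an additive subgroup `S` of the field. -/
def smulSub (α : K) (S : AddSubgroup K) : AddSubgroup K :=
  S.map (AddMonoidHom.mulLeft α)

/-- Points of `PG(2,q)`: one-dimensional subspaces of `K³`. -/
abbrev Pt (K : Type*) [Field K] := Projectivization K (Fin 3 → K)

/-- The point `(a : b : c)` of `PG(2,q)`. -/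
def pt3 (a b c : K) (habc : ¬(a = 0 ∧ b = 0 ∧ c = 0)) : Pt K :=
  Projectivization.mk K ![a, b, c] (fun h0 => habc
    ⟨by simpa using congrFun h0 0, by simpa using congrFun h0 1, by simpa using congrFun h0 2⟩)

/-- The point `(a : b)` of `PG(1,q)`. -/
def pt2 (a b : K) (hab : ¬(a = 0 ∧ b = 0)) : Projectivization K (Fin 2 → K) :=
  Projectivization.mk K ![a, b] (fun h0 => hab
    ⟨by simpa using congrFun h0 0, by simpa using congrFun h0 1⟩)

/-- An `F₂`-linear set of points of `PG(1,q)`: in characteristic two, the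
`F₂`-subspaces of `K²` are exactly its additive subgroups. -/
def IsF2Linear (T : Set (Projectivization K (Fin 2 → K))) : Prop :=
  ∃ U : AddSubgroup (Fin 2 → K),
    T = {P | ∃ u : Fin 2 → K, ∃ hu : u ≠ 0, u ∈ U ∧ Projectivization.mk K u hu = P}

/-- Lines of `PG(2,q)`: two-dimensional subspaces of `K³`. -/
def IsLine (L : Submodule K (Fin 3 → K)) : Prop := Module.finrank K L = 2

/-- Incidence of a point with a line. -/
def OnLine (P : Pt K) (L : Submodule K (Fin 3 → K)) : Prop := P.submodule ≤ L

/-- The number of points of `A` lying on the line `L`. -/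
def secantCount (A : Set (Pt K)) (L : Submodule K (Fin 3 → K)) : ℕ :=
  {P ∈ A | OnLine P L}.ncard

/-- A KM-arc of type `t`: `q+t` points meeting every line in `0`, `2` or `t` points. -/
def IsKMArc (q t : ℕ) (A : Set (Pt K)) : Prop :=
  A.ncard = q + t ∧ ∀ L : Submodule K (Fin 3 → K), IsLine L →
    secantCount A L = 0 ∨ secantCount A L = 2 ∨ secantCount A L = t

/-- The projectivity of `PG(2,q)` induced by an element of `GL(3,q)`. -/
def projMap (f : (Fin 3 → K) ≃ₗ[K] (Fin 3 → K)) : Pt K → Pt K :=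
  Projectivization.map f.toLinearMap f.injective

/-- `f` induces an elation with axis `L` and centre `R`: it fixes every point of `L`
and maps every line through `R` to itself. -/
def IsElation (f : (Fin 3 → K) ≃ₗ[K] (Fin 3 → K)) (L : Submodule K (Fin 3 → K))
    (R : Pt K) : Prop :=
  IsLine L ∧ OnLine R L ∧ (∀ P : Pt K, OnLine P L → projMap f P = P) ∧
    ∀ M : Submodule K (Fin 3 → K), IsLine M → OnLine R M →
      ∀ P : Pt K, OnLine P M → OnLine (projMap f P) M

/-- `f` induces an elation with axis `L` (for some centre on `L`). -/
def IsElationAxis (f : (Fin 3 → K) ≃ₗ[K] (Fin 3 → K)) (L : Submodule K (Fin 3 → K)) : Prop :=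
  ∃ R : Pt K, IsElation f L R

/-- The projectivity induced by `f` stabilises the point set `A`. -/
def Stabilises (f : (Fin 3 → K) ≃ₗ[K] (Fin 3 → K)) (A : Set (Pt K)) : Prop :=
  projMap f '' A = A

/-- `N` lies on every `t`-secant of `A` (i.e. `N` is the `t`-nucleus). -/
def IsNucleus (t : ℕ) (A : Set (Pt K)) (N : Pt K) : Prop :=
  ∀ L : Submodule K (Fin 3 → K), IsLine L → secantCount A L = t → OnLine N L

/-- An elation KM-arc of type `t` with `t`-nucleus `N` and elation line `linf`:
for every `t`-secant `L ≠ linf`, the group of elations with axis `linf` stabilising `A`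
acts transitively on `A ∩ L`. -/
def IsElationKMArc (q t : ℕ) (A : Set (Pt K)) (N : Pt K)
    (linf : Submodule K (Fin 3 → K)) : Prop :=
  IsKMArc q t A ∧ IsLine linf ∧ OnLine N linf ∧ IsNucleus t A N ∧
    ∀ L : Submodule K (Fin 3 → K), IsLine L → secantCount A L = t → L ≠ linf →
      ∀ P ∈ A, OnLine P L → ∀ Q ∈ A, OnLine Q L →
        ∃ f : (Fin 3 → K) ≃ₗ[K] (Fin 3 → K),
          IsElationAxis f linf ∧ Stabilises f A ∧ projMap f P = Q

/-- A translation KM-arc with translation line `l`: the group of elations with axis `l`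
stabilising `A` acts transitively on `A \ l`. -/
def IsTranslationKMArc (A : Set (Pt K)) (l : Submodule K (Fin 3 → K)) : Prop :=
  IsLine l ∧ ∀ P ∈ A, ¬OnLine P l → ∀ Q ∈ A, ¬OnLine Q l →
    ∃ f : (Fin 3 → K) ≃ₗ[K] (Fin 3 → K),
      IsElationAxis f l ∧ Stabilises f A ∧ projMap f P = Q

/-- The line `X = 0` of `PG(2,q)`. -/
def lineX0 (K : Type*) [Field K] : Submodule K (Fin 3 → K) :=
  LinearMap.ker (LinearMap.proj (R := K) (φ := fun _ : Fin 3 => K) 0)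

/-- The line `Y = aX` of `PG(2,q)`. -/
def lineYaX (a : K) : Submodule K (Fin 3 → K) where
  carrier := {v | v 1 = a * v 0}
  add_mem' := by
    intro v w hv hw
    simp only [Set.mem_setOf_eq, Pi.add_apply] at hv hw ⊢
    rw [hv, hw]; ring
  zero_mem' := by simp
  smul_mem' := by
    intro c v hv
    simp only [Set.mem_setOf_eq, Pi.smul_apply, smul_eq_mul] at hv ⊢
    rw [hv]; ring

/-- The point set of the `q/8`-construction (Theorem 4.4 of the paper), built from
`F₂`-independent `a 0, a 1, a 2` and coset representatives `b 0, b 1, b 2`. -/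
def q8Arc (h : ℕ) (a b : Fin 3 → K) : Set (Pt K) :=
  {P | ∃ x : K, (∀ i, Tr h (a i ^ 2 * x) = 0) ∧ P = pt3 0 1 x (by simp)}
    ∪ {P | ∃ l : Fin 3 → K, (∀ i, l i = 0 ∨ l i = 1) ∧ ∃ s : K, (∀ i, Tr h (a i * s) = 0) ∧
        P = pt3 1 (l 0 * a 0 + l 1 * a 1 + l 2 * a 2)
          ((l 0 + l 1 + l 2 + l 1 * l 2) * b 0 + (l 1 + l 2 + l 0 * l 2) * b 1
            + (l 2 + l 0 * l 1) * b 2 + s) (by simp)}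

/-- The point set of the `q/16`-construction (Theorem 5.2 of the paper). -/
def q16Arc (h : ℕ) (a : Fin 4 → K) (α : K) (b : Fin 3 → K) : Set (Pt K) :=
  {P | ∃ x : K, Tr h (a 0 * (a 0 + a 3) * x) = 0 ∧ Tr h (a 1 * (a 1 + a 3) * x) = 0 ∧
      Tr h (a 2 * (a 2 + a 3) * x) = 0 ∧ Tr h (a 3 * α * x) = 1 ∧ P = pt3 0 1 x (by simp)}
    ∪ {P | ∃ l : Fin 4 → K, (∀ i, l i = 0 ∨ l i = 1) ∧ ∃ s : K, (∀ i, Tr h (a i * s) = 0) ∧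
        P = pt3 1 (l 0 * a 0 + l 1 * a 1 + l 2 * a 2 + l 3 * a 3)
          ((l 0 + l 1 + l 2 + l 1 * l 2) * b 0 + (l 1 + l 2 + l 0 * l 2) * b 1
            + (l 2 + l 0 * l 1) * b 2 + s) (by simp)}

/-- The semilinear collineation of `PG(2,q)` sending the point spanned by `v`
to the point spanned by `M (ψ ∘ v)`. -/
def frobMap (ψ : K ≃+* K) (M : (Fin 3 → K) ≃ₗ[K] (Fin 3 → K)) (P : Pt K) : Pt K :=
  Projectivization.mk K (M fun i => ψ (P.rep i)) (by
    rw [LinearEquiv.map_ne_zero_iff]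
    intro h0
    apply P.rep_nonzero
    funext i
    have h2 : P.rep i = 0 := ψ.injective (by rw [map_zero]; exact congrFun h0 i)
    simpa using h2)

/-!
The elations `(x, y, z) ↦ (x, y, z + sx)` with `s ∈ S` stabilise `A` and permute each of its
affine columns `Y = αX` transitively, so all the work lies in counting the points of `A` on a line
`Z = mY + kX`. Reading `z` through the vector `(Tr (αᵢ z))ᵢ ∈ F₂³`, the affine points of `A` on
this line correspond to the `λ ∈ F₂³` with `M λ + c = f(λ)`, where `M = (Tr (αᵢ m αⱼ))` is
symmetric and `c = (Tr (αᵢ k))ᵢ`; the point at infinity of the line lies in `A` iff the diagonal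
`μ` of `M` is zero.

In characteristic two a symmetric `3 × 3` matrix acts as `M λ = μ * λ + p ⨯ λ`, where `*` is the
componentwise product and `p` collects the off-diagonal entries, while `f` is chosen such that
`f(λ + p) = f(λ) + f(p) + p ⨯ λ`. Hence translating `λ` by `p` removes `p`, and the count is the
size of a fibre of `λ ↦ f(λ) + μ * λ`. This map is bijective for `μ = 0`, where the point at
infinity is the second point of `A` on the line. For `μ ≠ 0` its fibres have `0` or `2` elements:
as `d ⬝ f(d) = 1` for `d ≠ 0`, two points of a fibre differ by some `d` with `μ ⬝ d = 1`, which
leaves no room for a third point, and each of the four such `d` does occur as a difference.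
-/

/-- The affine point `(1 : y : z)`. -/
def affinePt (y z : K) : Pt K := pt3 1 y z (by simp)

/-- The point `(0 : 1 : m)`, at which the lines `Z = mY + kX` meet the line `X = 0`. -/
def slopePt (m : K) : Pt K := pt3 0 1 m (by simp)

/-- The point `(0 : 0 : 1)`, at which the lines `Y = αX` meet the line `X = 0`. -/
def vertPt (K : Type*) [Field K] : Pt K := pt3 0 0 1 (by simp)

/-- The line `Z = mY + kX` of `PG(2,q)`. -/
def lineSlope (m k : K) : Submodule K (Fin 3 → K) :=
  LinearMap.ker ((LinearMap.proj 2 : (Fin 3 → K) →ₗ[K] K)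
    - (m • LinearMap.proj 1 + k • LinearMap.proj 0))

theorem eq_affinePt_or_slopePt_or_vertPt (P : Pt K) :
    (∃ y z, P = affinePt y z) ∨ (∃ m, P = slopePt m) ∨ P = vertPt K := by
  induction P using Projectivization.ind with
  | h v hv =>
  simp only [affinePt, slopePt, vertPt, pt3, Projectivization.mk_eq_mk_iff', funext_iff,
    Fin.forall_fin_succ, Fin.forall_fin_zero]
  by_cases h0 : v 0 = 0
  · by_cases h1 : v 1 = 0
    · exact .inr (.inr ⟨v 2, by simp [h0, h1]⟩)
    · exact .inr (.inl ⟨v 2 / v 1, v 1, by simp [h0, mul_div_cancel₀, h1]⟩)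
  · exact .inl ⟨v 1 / v 0, v 2 / v 0, v 0, by simp [mul_div_cancel₀, h0]⟩

theorem affinePt_inj {y z y' z' : K} : affinePt y z = affinePt y' z' ↔ y = y' ∧ z = z' := by
  simp [affinePt, pt3, Projectivization.mk_eq_mk_iff', funext_iff, Fin.forall_fin_succ, eq_comm]

theorem slopePt_injective : Function.Injective (slopePt : K → Pt K) := fun m m' h ↦ by
  simpa [slopePt, pt3, Projectivization.mk_eq_mk_iff', funext_iff, Fin.forall_fin_succ,
    eq_comm] using h

theorem slopePt_ne_affinePt (m y z : K) : slopePt m ≠ affinePt y z := by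
  simp +contextual [slopePt, affinePt, pt3, Projectivization.mk_eq_mk_iff', funext_iff,
    Fin.forall_fin_succ]

theorem vertPt_ne_affinePt (y z : K) : vertPt K ≠ affinePt y z := by
  simp +contextual [vertPt, affinePt, pt3, Projectivization.mk_eq_mk_iff', funext_iff,
    Fin.forall_fin_succ]

theorem vertPt_ne_slopePt (m : K) : vertPt K ≠ slopePt m := by
  simp +contextual [vertPt, slopePt, pt3, Projectivization.mk_eq_mk_iff', funext_iff,
    Fin.forall_fin_succ]

theorem onLine_mk {v : Fin 3 → K} {hv : v ≠ 0} {L : Submodule K (Fin 3 → K)} :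
    OnLine (Projectivization.mk K v hv) L ↔ v ∈ L := by
  rw [OnLine, Projectivization.submodule_mk, Submodule.span_singleton_le_iff_mem]

theorem onLine_pt3 {x y z : K} {h : ¬(x = 0 ∧ y = 0 ∧ z = 0)} {L : Submodule K (Fin 3 → K)} :
    OnLine (pt3 x y z h) L ↔ ![x, y, z] ∈ L := onLine_mk

theorem mem_lineX0 {v : Fin 3 → K} : v ∈ lineX0 K ↔ v 0 = 0 := Iff.rfl

theorem mem_lineYaX {α : K} {v : Fin 3 → K} : v ∈ lineYaX α ↔ v 1 = α * v 0 := Iff.rfl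

theorem mem_lineSlope {m k : K} {v : Fin 3 → K} :
    v ∈ lineSlope m k ↔ v 2 = m * v 1 + k * v 0 := by
  simp [lineSlope, sub_eq_zero]

section Incidence

variable {m k α y z : K}

theorem not_onLine_affinePt_lineX0 : ¬OnLine (affinePt y z) (lineX0 K) := by
  simp [affinePt, onLine_pt3, mem_lineX0]

theorem onLine_slopePt_lineX0 : OnLine (slopePt m) (lineX0 K) := by
  simp [slopePt, onLine_pt3, mem_lineX0]

theorem onLine_vertPt_lineX0 : OnLine (vertPt K) (lineX0 K) := by
  simp [vertPt, onLine_pt3, mem_lineX0]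

theorem onLine_affinePt_lineYaX : OnLine (affinePt y z) (lineYaX α) ↔ y = α := by
  simp [affinePt, onLine_pt3, mem_lineYaX]

theorem not_onLine_slopePt_lineYaX : ¬OnLine (slopePt m) (lineYaX α) := by
  simp [slopePt, onLine_pt3, mem_lineYaX]

theorem onLine_vertPt_lineYaX : OnLine (vertPt K) (lineYaX α) := by
  simp [vertPt, onLine_pt3, mem_lineYaX]

theorem exists_eq_affinePt_of_onLine_lineYaX {P : Pt K} (hP : OnLine P (lineYaX α))
    (hPv : P ≠ vertPt K) : ∃ z, P = affinePt α z := by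
  rcases eq_affinePt_or_slopePt_or_vertPt P with ⟨y, z, rfl⟩ | ⟨m, rfl⟩ | rfl
  · exact ⟨z, by rw [onLine_affinePt_lineYaX.1 hP]⟩
  · exact absurd hP not_onLine_slopePt_lineYaX
  · exact absurd rfl hPv

theorem onLine_affinePt_lineSlope : OnLine (affinePt y z) (lineSlope m k) ↔ z = m * y + k := by
  simp [affinePt, onLine_pt3, mem_lineSlope]

theorem onLine_slopePt_lineSlope {n : K} : OnLine (slopePt n) (lineSlope m k) ↔ n = m := by
  simp [slopePt, onLine_pt3, mem_lineSlope]

end Incidence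

theorem isLine_ker {f : Module.Dual K (Fin 3 → K)} (hf : f ≠ 0) : IsLine (LinearMap.ker f) := by
  have := Module.Dual.finrank_ker_add_one_of_ne_zero hf
  rwa [Module.finrank_fin_fun, Nat.succ_inj] at this

theorem isLine_lineX0 : IsLine (lineX0 K) :=
  isLine_ker fun h ↦ one_ne_zero (LinearMap.congr_fun h (1 : Fin 3 → K))

theorem IsLine.exists_mem_iff {L : Submodule K (Fin 3 → K)} (hL : IsLine L) :
    ∃ p q r : K, (p ≠ 0 ∨ q ≠ 0 ∨ r ≠ 0) ∧ ∀ v, v ∈ L ↔ p * v 0 + q * v 1 + r * v 2 = 0 := by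
  have hlt : L < ⊤ := lt_top_iff_ne_top.2 fun h ↦ by
    rw [IsLine, h, finrank_top, Module.finrank_fin_fun] at hL
    omega
  obtain ⟨f, hf, hle⟩ := Submodule.exists_le_ker_of_lt_top L hlt
  have hLf : L = LinearMap.ker f :=
    Submodule.eq_of_le_of_finrank_eq hle (hL.trans (isLine_ker hf).symm)
  have hcoord (v : Fin 3 → K) :
      f v = f (Pi.single 0 1) * v 0 + f (Pi.single 1 1) * v 1 + f (Pi.single 2 1) * v 2 := by
    conv_lhs => rw [pi_eq_sum_univ' v]
    simp [Fin.sum_univ_three, mul_comm]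
  refine ⟨_, _, _, ?_, fun v ↦ by rw [hLf, LinearMap.mem_ker, hcoord]⟩
  contrapose! hf
  exact LinearMap.ext fun v ↦ by simp [hcoord v, hf]

theorem IsLine.eq_lineX0_or_lineYaX_or_lineSlope {L : Submodule K (Fin 3 → K)} (hL : IsLine L) :
    L = lineX0 K ∨ (∃ α, L = lineYaX α) ∨ ∃ m k, L = lineSlope m k := by
  obtain ⟨p, q, r, hpqr, hmem⟩ := hL.exists_mem_iff
  simp only [Submodule.ext_iff, hmem, mem_lineX0, mem_lineYaX, mem_lineSlope]
  by_cases hr : r = 0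
  · by_cases hq : q = 0
    · exact .inl fun v ↦ by simp_all
    · exact .inr (.inl ⟨-p / q, fun v ↦ by grind⟩)
  · exact .inr (.inr ⟨-q / r, -p / r, fun v ↦ by grind⟩)

section SecantCount

variable {A : Set (Pt K)}

theorem secantCount_lineX0 (hA : vertPt K ∉ A) :
    secantCount A (lineX0 K) = {m : K | slopePt m ∈ A}.ncard := by
  rw [secantCount, ← Set.ncard_image_of_injective {m : K | slopePt m ∈ A} slopePt_injective]
  congr 1
  ext P
  rcases eq_affinePt_or_slopePt_or_vertPt P with ⟨y, z, rfl⟩ | ⟨m, rfl⟩ | rfl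
  · simp [not_onLine_affinePt_lineX0, slopePt_ne_affinePt]
  · simp [onLine_slopePt_lineX0, slopePt_injective.eq_iff]
  · simp [hA, (vertPt_ne_slopePt _).symm]

theorem secantCount_lineYaX (hA : vertPt K ∉ A) (α : K) :
    secantCount A (lineYaX α) = {z | affinePt α z ∈ A}.ncard := by
  have hinj : Function.Injective (affinePt α) := fun z z' h ↦ (affinePt_inj.1 h).2
  rw [secantCount, ← Set.ncard_image_of_injective _ hinj]
  congr 1
  ext P
  rcases eq_affinePt_or_slopePt_or_vertPt P with ⟨y, z, rfl⟩ | ⟨m, rfl⟩ | rfl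
  · simp only [Set.mem_ofPred_eq, Set.mem_image, onLine_affinePt_lineYaX, affinePt_inj]
    aesop
  · simp [not_onLine_slopePt_lineYaX, (slopePt_ne_affinePt _ _ _).symm]
  · simp [hA, (vertPt_ne_affinePt _ _).symm]

theorem secantCount_lineSlope [Finite K] (hA : vertPt K ∉ A) (m k : K) :
    secantCount A (lineSlope m k) =
      {y | affinePt y (m * y + k) ∈ A}.ncard + if slopePt m ∈ A then 1 else 0 := by
  have hinj : Function.Injective fun y ↦ affinePt y (m * y + k) := fun y y' h ↦
    (affinePt_inj.1 h).1
  have hsplit : {P ∈ A | OnLine P (lineSlope m k)} =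
      (fun y ↦ affinePt y (m * y + k)) '' {y | affinePt y (m * y + k) ∈ A} ∪
        {P | P = slopePt m ∧ slopePt m ∈ A} := by
    ext P
    rcases eq_affinePt_or_slopePt_or_vertPt P with ⟨y, z, rfl⟩ | ⟨n, rfl⟩ | rfl
    · simp only [Set.mem_ofPred_eq, Set.mem_image, Set.mem_union, onLine_affinePt_lineSlope,
        affinePt_inj, (slopePt_ne_affinePt _ _ _).symm]
      aesop
    · simp only [Set.mem_ofPred_eq, Set.mem_image, Set.mem_union, onLine_slopePt_lineSlope,
        slopePt_injective.eq_iff, (slopePt_ne_affinePt _ _ _).symm]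
      aesop
    · simp [hA, (vertPt_ne_affinePt _ _).symm, vertPt_ne_slopePt]
  have hdisj : Disjoint ((fun y ↦ affinePt y (m * y + k)) '' {y | affinePt y (m * y + k) ∈ A})
      {P | P = slopePt m ∧ slopePt m ∈ A} := by
    rw [Set.disjoint_left]
    rintro _ ⟨y, -, rfl⟩ ⟨h, -⟩
    exact slopePt_ne_affinePt _ _ _ h.symm
  rw [secantCount, hsplit, Set.ncard_union_eq hdisj, Set.ncard_image_of_injective _ hinj]
  split_ifs with h <;> simp [h]

theorem ncard_eq_ncard_slopePt_add_ncard_affinePt [Finite K] (hA : vertPt K ∉ A) :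
    A.ncard = {m : K | slopePt m ∈ A}.ncard + {p : K × K | affinePt p.1 p.2 ∈ A}.ncard := by
  have hinj : Function.Injective fun p : K × K ↦ affinePt p.1 p.2 := fun p p' h ↦
    Prod.ext_iff.2 (affinePt_inj.1 h)
  have hsplit : A = slopePt '' {m : K | slopePt m ∈ A} ∪
      (fun p : K × K ↦ affinePt p.1 p.2) '' {p | affinePt p.1 p.2 ∈ A} := by
    ext P
    rcases eq_affinePt_or_slopePt_or_vertPt P with ⟨y, z, rfl⟩ | ⟨m, rfl⟩ | rfl
    · simp [affinePt_inj, slopePt_ne_affinePt]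
    · simp [slopePt_injective.eq_iff, (slopePt_ne_affinePt _ _ _).symm]
    · simp [hA, (vertPt_ne_affinePt _ _).symm, (vertPt_ne_slopePt _).symm]
  have hdisj : Disjoint (slopePt '' {m : K | slopePt m ∈ A})
      ((fun p : K × K ↦ affinePt p.1 p.2) '' {p | affinePt p.1 p.2 ∈ A}) := by
    rw [Set.disjoint_left]
    rintro _ ⟨m, -, rfl⟩ ⟨p, -, h⟩
    exact slopePt_ne_affinePt _ _ _ h.symm
  conv_lhs => rw [hsplit]
  rw [Set.ncard_union_eq hdisj, Set.ncard_image_of_injective _ slopePt_injective,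
    Set.ncard_image_of_injective _ hinj]

end SecantCount

theorem isElation_transvection {f : Module.Dual K (Fin 3 → K)} (hf : f ≠ 0) {v : Fin 3 → K}
    (hv : f v = 0) {R : Pt K} (hR : OnLine R (LinearMap.ker f)) (hvR : v ∈ R.submodule) :
    IsElation (LinearEquiv.transvection hv) (LinearMap.ker f) R := by
  refine ⟨isLine_ker hf, hR, fun P hP ↦ ?_, fun M _ hRM P hP ↦ ?_⟩
  · induction P using Projectivization.ind with
    | h w hw =>
    have hfw : f w = 0 := onLine_mk.1 hP
    simp [projMap, Projectivization.map_mk, LinearMap.transvection.apply, hfw]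
  · induction P using Projectivization.ind with
    | h w hw =>
    rw [projMap, Projectivization.map_mk, onLine_mk]
    exact M.add_mem (onLine_mk.1 hP) (M.smul_mem _ (hRM hvR))

/-- The elation `(x, y, z) ↦ (x, y, z + sx)` with axis `X = 0` and centre `(0 : 0 : 1)`
(the identity for `s = 0`). -/
def shear (s : K) : (Fin 3 → K) ≃ₗ[K] (Fin 3 → K) :=
  LinearEquiv.transvection (f := LinearMap.proj 0) (v := ![0, 0, s]) rfl

theorem shear_apply (s : K) (v : Fin 3 → K) : shear s v = v + v 0 • ![0, 0, s] := rfl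

theorem isElationAxis_shear (s : K) : IsElationAxis (shear s) (lineX0 K) := by
  refine ⟨vertPt K, isElation_transvection ?_ rfl onLine_vertPt_lineX0 ?_⟩
  · exact fun h ↦ one_ne_zero (LinearMap.congr_fun h (1 : Fin 3 → K))
  · rw [vertPt, pt3, Projectivization.submodule_mk, Submodule.mem_span_singleton]
    exact ⟨s, by simp⟩

theorem projMap_shear_affinePt (s y z : K) :
    projMap (shear s) (affinePt y z) = affinePt y (z + s) := by
  have hv : shear s ![1, y, z] = ![1, y, z + s] := by
    rw [shear_apply]
    ext i
    fin_cases i <;> simp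
  simp only [projMap, affinePt, pt3, Projectivization.map_mk]
  congr 1

theorem projMap_shear_ne_id {s : K} (hs : s ≠ 0) : projMap (shear s) ≠ id := fun h ↦ by
  simpa [projMap_shear_affinePt, affinePt_inj, hs] using congrFun h (affinePt 0 0)

theorem projMap_shear_of_onLine_lineX0 {s : K} {P : Pt K} (hP : OnLine P (lineX0 K)) :
    projMap (shear s) P = P :=
  (isElationAxis_shear s).choose_spec.2.2.1 P hP

theorem stabilises_shear {A : Set (Pt K)} {s : K}
    (hA : ∀ y z, affinePt y (z + s) ∈ A ↔ affinePt y z ∈ A) : Stabilises (shear s) A := by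
  have hfix {P : Pt K} (hP : OnLine P (lineX0 K)) := projMap_shear_of_onLine_lineX0 (s := s) hP
  refine Set.Subset.antisymm (Set.image_subset_iff.2 fun P hP ↦ ?_) fun P hP ↦ ?_
  · rcases eq_affinePt_or_slopePt_or_vertPt P with ⟨y, z, rfl⟩ | ⟨m, rfl⟩ | rfl
    · rwa [Set.mem_preimage, projMap_shear_affinePt, hA]
    · rwa [Set.mem_preimage, hfix onLine_slopePt_lineX0]
    · rwa [Set.mem_preimage, hfix onLine_vertPt_lineX0]
  · rcases eq_affinePt_or_slopePt_or_vertPt P with ⟨y, z, rfl⟩ | ⟨m, rfl⟩ | rfl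
    · refine ⟨affinePt y (z - s), ?_, ?_⟩
      · rwa [← hA, sub_add_cancel]
      · rw [projMap_shear_affinePt, sub_add_cancel]
    · exact ⟨_, hP, hfix onLine_slopePt_lineX0⟩
    · exact ⟨_, hP, hfix onLine_vertPt_lineX0⟩

section TraceVec

open Matrix

variable {ι : Type*} [Algebra (ZMod 2) K]

/-- The `F₂`-linear map `x ↦ (Tr (a i * x))ᵢ`, whose fibres are the cosets of the subspace `S`
of the construction. -/
def traceVec (a : ι → K) : K →ₗ[ZMod 2] ι → ZMod 2 :=
  LinearMap.pi fun i ↦ Algebra.trace (ZMod 2) K ∘ₗ LinearMap.mulLeft (ZMod 2) (a i)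

theorem traceVec_apply (a : ι → K) (x : K) (i : ι) :
    traceVec a x i = Algebra.trace (ZMod 2) K (a i * x) := rfl

theorem setOf_traceVec_eq_image_add (a : ι → K) (z : K) :
    {x | traceVec a x = traceVec a z} = (z + ·) '' LinearMap.ker (traceVec a) := by
  ext x
  simpa [neg_add_eq_zero] using eq_comm

/-- The Gram matrix of the vectors `a i` for the symmetric bilinear form
`(x, y) ↦ Tr (m * x * y)`. -/
def traceGram (a : ι → K) (m : K) : Matrix ι ι (ZMod 2) :=
  Matrix.of fun i j ↦ Algebra.trace (ZMod 2) K (a i * (m * a j))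

theorem isSymm_traceGram (a : ι → K) (m : K) : (traceGram a m).IsSymm :=
  Matrix.IsSymm.ext fun i j ↦ by simp [traceGram, mul_left_comm, mul_comm]

theorem diag_traceGram (a : ι → K) (m : K) : (traceGram a m).diag = traceVec (a ^ 2) m := by
  ext i
  simp only [Matrix.diag_apply, traceGram, Matrix.of_apply, traceVec_apply, Pi.pow_apply]
  ring_nf

theorem linearIndependent_sq [Finite K] {a : ι → K} (ha : LinearIndependent (ZMod 2) a) :
    LinearIndependent (ZMod 2) (a ^ 2) := by
  cases nonempty_fintype K
  let φ := FiniteField.frobeniusAlgHom (ZMod 2) K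
  have hφ : a ^ 2 = φ.toLinearMap ∘ a := by
    ext i
    simp [φ]
  rw [hφ]
  exact ha.map' _ (LinearMap.ker_eq_bot.2 φ.injective)

theorem traceVec_surjective [Finite K] [Finite ι] {a : ι → K}
    (ha : LinearIndependent (ZMod 2) a) : Function.Surjective (traceVec a) := by
  cases nonempty_fintype ι
  rw [← LinearMap.dualMap_injective_iff, ← LinearMap.ker_eq_bot, LinearMap.ker_eq_bot']
  intro φ hφ
  have htrace (x : K) : Algebra.trace (ZMod 2) K ((∑ i, φ (Pi.single i 1) • a i) * x) = 0 := by
    have := LinearMap.congr_fun hφ x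
    rw [LinearMap.dualMap_apply, pi_eq_sum_univ' (traceVec a x)] at this
    simpa [Finset.mul_sum, traceVec_apply, mul_comm] using this
  have hsum := (traceForm_nondegenerate (ZMod 2) K).1 _ htrace
  have hφ' := Fintype.linearIndependent_iff.1 ha _ hsum
  exact LinearMap.pi_ext' fun i ↦ LinearMap.ext_ring (hφ' i)

variable [Fintype ι]

theorem traceVec_mul_linearCombination_add (a : ι → K) (m k : K) (v : ι → ZMod 2) :
    traceVec a (m * Fintype.linearCombination (ZMod 2) a v + k) =
      traceGram a m *ᵥ v + traceVec a k := by
  ext i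
  simp [traceVec_apply, traceGram, Matrix.mulVec, dotProduct, Fintype.linearCombination_apply,
    mul_add, Finset.mul_sum, map_sum, mul_comm]

variable [Finite K] {a : ι → K}

theorem natCard_quotient_ker_traceVec (ha : LinearIndependent (ZMod 2) a) :
    Nat.card (K ⧸ LinearMap.ker (traceVec a)) = 2 ^ Fintype.card ι := by
  rw [Nat.card_congr ((traceVec a).quotKerEquivOfSurjective (traceVec_surjective ha)).toEquiv]
  simp

theorem two_pow_card_dvd_natCard (ha : LinearIndependent (ZMod 2) a) :
    2 ^ Fintype.card ι ∣ Nat.card K := by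
  rw [← natCard_quotient_ker_traceVec ha]
  exact Dvd.intro_left _ (Submodule.card_eq_card_quotient_mul_card _).symm

theorem ncard_setOf_traceVec_eq (ha : LinearIndependent (ZMod 2) a) (w : ι → ZMod 2) :
    {z | traceVec a z = w}.ncard = Nat.card K / 2 ^ Fintype.card ι := by
  obtain ⟨z, rfl⟩ := traceVec_surjective ha w
  rw [setOf_traceVec_eq_image_add, Set.ncard_image_of_injective _ (add_right_injective z),
    (LinearMap.ker (traceVec a)).card_eq_card_quotient_mul_card, natCard_quotient_ker_traceVec ha,
    Nat.mul_div_cancel _ (by positivity)]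
  rfl

end TraceVec

section TraceArc

open Matrix

variable {ι : Type*} [Fintype ι] [Algebra (ZMod 2) K]
  {a : ι → K} {f : (ι → ZMod 2) → ι → ZMod 2}

/-- The point set of the `q/8`-construction, for any number of vectors `a i` and any map `f` in
place of `(f₁, f₂, f₃)`. The vertical coordinate is prescribed by its traces `Tr (a i * z)` instead
of a choice of coset representatives. -/
def traceArc (a : ι → K) (f : (ι → ZMod 2) → ι → ZMod 2) : Set (Pt K) :=
  {P | ∃ m, traceVec (a ^ 2) m = 0 ∧ P = slopePt m} ∪
    {P | ∃ v z, traceVec a z = f v ∧ P = affinePt (Fintype.linearCombination (ZMod 2) a v) z}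

theorem slopePt_mem_traceArc {m : K} : slopePt m ∈ traceArc a f ↔ traceVec (a ^ 2) m = 0 := by
  simp [traceArc, slopePt_injective.eq_iff, slopePt_ne_affinePt]

theorem affinePt_mem_traceArc {y z : K} : affinePt y z ∈ traceArc a f ↔
    ∃ v, Fintype.linearCombination (ZMod 2) a v = y ∧ traceVec a z = f v := by
  simp only [traceArc, Set.mem_union, Set.mem_ofPred_eq, (slopePt_ne_affinePt _ _ _).symm,
    affinePt_inj, and_false, exists_false, false_or]
  grind

theorem vertPt_notMem_traceArc : vertPt K ∉ traceArc a f := by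
  simp [traceArc, vertPt_ne_slopePt, vertPt_ne_affinePt]

theorem affinePt_linearCombination_mem_traceArc (ha : LinearIndependent (ZMod 2) a)
    {v : ι → ZMod 2} {z : K} :
    affinePt (Fintype.linearCombination (ZMod 2) a v) z ∈ traceArc a f ↔ traceVec a z = f v := by
  simp [affinePt_mem_traceArc, ha.fintypeLinearCombination_injective.eq_iff]

theorem traceVec_sub_eq_zero_of_affinePt_mem_traceArc (ha : LinearIndependent (ZMod 2) a)
    {y z z' : K} (hz : affinePt y z ∈ traceArc a f) (hz' : affinePt y z' ∈ traceArc a f) :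
    traceVec a (z' - z) = 0 := by
  obtain ⟨v, rfl, hv⟩ := affinePt_mem_traceArc.1 hz
  rw [map_sub, hv, (affinePt_linearCombination_mem_traceArc ha).1 hz', sub_self]

theorem stabilises_shear_traceArc {s : K} (hs : traceVec a s = 0) :
    Stabilises (shear s) (traceArc a f) :=
  stabilises_shear fun y z ↦ by simp [affinePt_mem_traceArc, hs]

variable [Finite K]

theorem setOf_affinePt_mem_traceArc_eq_empty_or_coset (ha : LinearIndependent (ZMod 2) a)
    (f : (ι → ZMod 2) → ι → ZMod 2) (y : K) :
    {z | affinePt y z ∈ traceArc a f} = ∅ ∨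
      ∃ β, {z | affinePt y z ∈ traceArc a f} = (β + ·) '' LinearMap.ker (traceVec a) := by
  by_cases hy : ∃ v, Fintype.linearCombination (ZMod 2) a v = y
  · obtain ⟨v, rfl⟩ := hy
    obtain ⟨β, hβ⟩ := traceVec_surjective ha (f v)
    refine .inr ⟨β, ?_⟩
    simp only [affinePt_linearCombination_mem_traceArc ha, ← hβ, setOf_traceVec_eq_image_add]
  · refine .inl (Set.eq_empty_of_forall_notMem fun z hz ↦ hy ?_)
    obtain ⟨v, hv, -⟩ := affinePt_mem_traceArc.1 hz
    exact ⟨v, hv⟩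

theorem secantCount_traceArc_lineX0 (ha : LinearIndependent (ZMod 2) a) :
    secantCount (traceArc a f) (lineX0 K) = Nat.card K / 2 ^ Fintype.card ι := by
  simp only [secantCount_lineX0 vertPt_notMem_traceArc, slopePt_mem_traceArc]
  exact ncard_setOf_traceVec_eq (linearIndependent_sq ha) 0

theorem secantCount_traceArc_lineYaX (ha : LinearIndependent (ZMod 2) a) (α : K) :
    secantCount (traceArc a f) (lineYaX α) = 0 ∨
      secantCount (traceArc a f) (lineYaX α) = Nat.card K / 2 ^ Fintype.card ι := by
  rw [secantCount_lineYaX vertPt_notMem_traceArc]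
  rcases setOf_affinePt_mem_traceArc_eq_empty_or_coset ha f α with h | ⟨β, h⟩
  · exact .inl (by rw [h, Set.ncard_empty])
  · exact .inr (by rw [h, ← setOf_traceVec_eq_image_add, ncard_setOf_traceVec_eq ha])

theorem secantCount_traceArc_lineSlope (ha : LinearIndependent (ZMod 2) a) (m k : K) :
    secantCount (traceArc a f) (lineSlope m k) =
      {v | traceGram a m *ᵥ v + traceVec a k = f v}.ncard +
        if (traceGram a m).diag = 0 then 1 else 0 := by
  have himage : {y | affinePt y (m * y + k) ∈ traceArc a f} =
      Fintype.linearCombination (ZMod 2) a '' {v | traceGram a m *ᵥ v + traceVec a k = f v} := by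
    ext y
    simp only [Set.mem_ofPred_eq, Set.mem_image, affinePt_mem_traceArc,
      ← traceVec_mul_linearCombination_add]
    grind
  rw [secantCount_lineSlope vertPt_notMem_traceArc, himage,
    Set.ncard_image_of_injective _ ha.fintypeLinearCombination_injective]
  simp only [slopePt_mem_traceArc, diag_traceGram]

theorem ncard_setOf_affinePt_mem_traceArc (ha : LinearIndependent (ZMod 2) a) :
    {p : K × K | affinePt p.1 p.2 ∈ traceArc a f}.ncard = Nat.card K := by
  let S : Set ((ι → ZMod 2) × K) := {x | traceVec a x.2 = f x.1}
  have himage : {p : K × K | affinePt p.1 p.2 ∈ traceArc a f} =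
      Prod.map (Fintype.linearCombination (ZMod 2) a) id '' S := by
    ext ⟨y, z⟩
    simp [S, affinePt_mem_traceArc, and_comm]
  have hfibre (v : ι → ZMod 2) : Nat.card {z | (v, z) ∈ S} = Nat.card K / 2 ^ Fintype.card ι :=
    ncard_setOf_traceVec_eq ha (f v)
  rw [himage, Set.ncard_image_of_injective _
    (ha.fintypeLinearCombination_injective.prodMap Function.injective_id),
    ← Nat.card_coe_set_eq, Nat.card_congr (Equiv.setProdEquivSigma S), Nat.card_sigma]
  simp [hfibre, Nat.mul_div_cancel' (two_pow_card_dvd_natCard ha)]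

theorem ncard_traceArc (ha : LinearIndependent (ZMod 2) a) :
    (traceArc a f).ncard = Nat.card K + Nat.card K / 2 ^ Fintype.card ι := by
  rw [ncard_eq_ncard_slopePt_add_ncard_affinePt vertPt_notMem_traceArc,
    ncard_setOf_affinePt_mem_traceArc ha, ← secantCount_lineX0 vertPt_notMem_traceArc,
    secantCount_traceArc_lineX0 ha, add_comm]

theorem isKMArc_traceArc (ha : LinearIndependent (ZMod 2) a)
    (hsec : ∀ m k, secantCount (traceArc a f) (lineSlope m k) = 0 ∨
      secantCount (traceArc a f) (lineSlope m k) = 2) :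
    IsKMArc (Nat.card K) (Nat.card K / 2 ^ Fintype.card ι) (traceArc a f) := by
  refine ⟨ncard_traceArc ha, fun L hL ↦ ?_⟩
  rcases hL.eq_lineX0_or_lineYaX_or_lineSlope with rfl | ⟨α, rfl⟩ | ⟨m, k, rfl⟩
  · exact .inr (.inr (secantCount_traceArc_lineX0 ha))
  · exact (secantCount_traceArc_lineYaX ha α).imp_right .inr
  · exact (hsec m k).imp_right .inl

theorem isElationKMArc_traceArc (ha : LinearIndependent (ZMod 2) a)
    (hsec : ∀ m k, secantCount (traceArc a f) (lineSlope m k) = 0 ∨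
      secantCount (traceArc a f) (lineSlope m k) = 2)
    (ht : 2 < Nat.card K / 2 ^ Fintype.card ι) :
    IsElationKMArc (Nat.card K) (Nat.card K / 2 ^ Fintype.card ι) (traceArc a f) (vertPt K)
      (lineX0 K) := by
  have hvert {L : Submodule K (Fin 3 → K)} (hL : IsLine L)
      (hLt : secantCount (traceArc a f) L = Nat.card K / 2 ^ Fintype.card ι) :
      L = lineX0 K ∨ ∃ α, L = lineYaX α := by
    rcases hL.eq_lineX0_or_lineYaX_or_lineSlope with h | h | ⟨m, k, rfl⟩
    · exact .inl h
    · exact .inr h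
    · have := hsec m k
      lia
  refine ⟨isKMArc_traceArc ha hsec, isLine_lineX0, onLine_vertPt_lineX0, fun L hL hLt ↦ ?_,
    fun L hL hLt hLX P hPA hPL Q hQA hQL ↦ ?_⟩
  · rcases hvert hL hLt with rfl | ⟨α, rfl⟩
    · exact onLine_vertPt_lineX0
    · exact onLine_vertPt_lineYaX
  · obtain ⟨α, rfl⟩ := (hvert hL hLt).resolve_left hLX
    obtain ⟨z, rfl⟩ := exists_eq_affinePt_of_onLine_lineYaX hPL
      (ne_of_mem_of_not_mem hPA vertPt_notMem_traceArc)
    obtain ⟨z', rfl⟩ := exists_eq_affinePt_of_onLine_lineYaX hQL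
      (ne_of_mem_of_not_mem hQA vertPt_notMem_traceArc)
    refine ⟨shear (z' - z), isElationAxis_shear _, stabilises_shear_traceArc
      (traceVec_sub_eq_zero_of_affinePt_mem_traceArc ha hPA hQA), ?_⟩
    rw [projMap_shear_affinePt, add_sub_cancel]

theorem exists_stabilises_traceArc_projMap_ne_id (ha : LinearIndependent (ZMod 2) a)
    (ht : 1 < Nat.card K / 2 ^ Fintype.card ι) (f : (ι → ZMod 2) → ι → ZMod 2) :
    ∃ g, IsElationAxis g (lineX0 K) ∧ Stabilises g (traceArc a f) ∧ projMap g ≠ id := by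
  rw [← ncard_setOf_traceVec_eq ha 0] at ht
  obtain ⟨s, hs, hs0⟩ := Set.exists_ne_of_one_lt_ncard ht 0
  exact ⟨shear s, isElationAxis_shear s, stabilises_shear_traceArc hs, projMap_shear_ne_id hs0⟩

end TraceArc

section QuadraticMap

open Finset Matrix

theorem mulVec_eq_diag_mul_add_cross {R : Type*} [CommRing R] [CharP R 2]
    {M : Matrix (Fin 3) (Fin 3) R} (hM : M.IsSymm) (v : Fin 3 → R) :
    M *ᵥ v = M.diag * v + ![M 1 2, M 0 2, M 0 1] ⨯₃ v := by
  ext i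
  fin_cases i <;>
    simp [Matrix.mulVec, dotProduct, Fin.sum_univ_three, cross_apply, CharTwo.sub_eq_add,
      hM.apply 0 1, hM.apply 0 2, hM.apply 1 2] <;>
    ring

/-- The map `(f₁, f₂, f₃) : F₂³ → F₂³` of the `q/8`-construction. -/
def q8Map (v : Fin 3 → ZMod 2) : Fin 3 → ZMod 2 :=
  ![v 0 + v 1 + v 2 + v 1 * v 2, v 1 + v 2 + v 0 * v 2, v 2 + v 0 * v 1]

theorem q8Map_add (v p : Fin 3 → ZMod 2) : q8Map (v + p) = q8Map v + q8Map p + p ⨯₃ v := by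
  ext i
  fin_cases i <;> simp [q8Map, cross_apply, CharTwo.sub_eq_add] <;> ring

theorem q8Map_bijective : Function.Bijective q8Map := by
  decide

theorem card_filter_q8Map_add_mul_eq : ∀ μ ≠ 0, ∀ c,
    #{v | q8Map v + μ * v = c} = 0 ∨ #{v | q8Map v + μ * v = c} = 2 := by
  decide

theorem ncard_setOf_q8Map_add_mul_eq (μ c : Fin 3 → ZMod 2) :
    ({v | q8Map v + μ * v = c}.ncard + if μ = 0 then 1 else 0) = 0 ∨
      ({v | q8Map v + μ * v = c}.ncard + if μ = 0 then 1 else 0) = 2 := by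
  split_ifs with hμ
  · obtain ⟨v, rfl⟩ := q8Map_bijective.2 c
    simp [hμ, q8Map_bijective.1.eq_iff]
  · simpa [← Set.ncard_coe_finset] using card_filter_q8Map_add_mul_eq μ hμ c

theorem ncard_setOf_mulVec_add_eq_q8Map {M : Matrix (Fin 3) (Fin 3) (ZMod 2)} (hM : M.IsSymm)
    (c : Fin 3 → ZMod 2) :
    ({v | M *ᵥ v + c = q8Map v}.ncard + if M.diag = 0 then 1 else 0) = 0 ∨
      ({v | M *ᵥ v + c = q8Map v}.ncard + if M.diag = 0 then 1 else 0) = 2 := by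
  let p := ![M 1 2, M 0 2, M 0 1]
  have htranslate (v : Fin 3 → ZMod 2) : M *ᵥ v + c = q8Map v ↔
      q8Map (v + p) + M.diag * (v + p) = q8Map p + M.diag * p + c := by
    rw [mulVec_eq_diag_mul_add_cross hM, q8Map_add]
    grind
  have hpre : {v | M *ᵥ v + c = q8Map v} =
      (· + p) ⁻¹' {v | q8Map v + M.diag * v = q8Map p + M.diag * p + c} := Set.ext htranslate
  rw [hpre, Set.ncard_preimage_of_injective_subset_range (add_left_injective p)
    (by simp [(add_right_surjective p).range_eq])]
  exact ncard_setOf_q8Map_add_mul_eq _ _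

theorem secantCount_traceArc_q8Map_lineSlope [Finite K] [Algebra (ZMod 2) K] {a : Fin 3 → K}
    (ha : LinearIndependent (ZMod 2) a) (m k : K) :
    secantCount (traceArc a q8Map) (lineSlope m k) = 0 ∨
      secantCount (traceArc a q8Map) (lineSlope m k) = 2 := by
  rw [secantCount_traceArc_lineSlope ha]
  exact ncard_setOf_mulVec_add_eq_q8Map (isSymm_traceGram a m) _

end QuadraticMap

section F2Coordinates

variable [Algebra (ZMod 2) K]

theorem forall_eq_zero_or_one_iff_exists_algebraMap {ι : Type*} {l : ι → K} :
    (∀ i, l i = 0 ∨ l i = 1) ↔ ∃ v : ι → ZMod 2, l = algebraMap (ZMod 2) K ∘ v := by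
  constructor
  · intro hl
    refine ⟨fun i ↦ if l i = 0 then 0 else 1, funext fun i ↦ ?_⟩
    rcases hl i with h | h <;> simp [h]
  · rintro ⟨v, rfl⟩ i
    have hv : ∀ x : ZMod 2, x = 0 ∨ x = 1 := by decide
    exact (hv (v i)).imp (by simp +contextual) (by simp +contextual)

theorem F2Indep.linearIndependent {n : ℕ} {a : Fin n → K} (ha : F2Indep a) :
    LinearIndependent (ZMod 2) a := by
  refine Fintype.linearIndependent_iff.2 fun v hv i ↦ ?_
  have := ha (algebraMap (ZMod 2) K ∘ v) (forall_eq_zero_or_one_iff_exists_algebraMap.2 ⟨v, rfl⟩)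
    (by simpa [Algebra.smul_def] using hv) i
  simpa using this

theorem linearCombination_fin_three (a : Fin 3 → K) (v : Fin 3 → ZMod 2) :
    Fintype.linearCombination (ZMod 2) a v = algebraMap (ZMod 2) K (v 0) * a 0 +
      algebraMap (ZMod 2) K (v 1) * a 1 + algebraMap (ZMod 2) K (v 2) * a 2 := by
  simp [Fintype.linearCombination_apply, Fin.sum_univ_three, Algebra.smul_def]

variable [Fintype K] {h : ℕ} {ι : Type*}

theorem algebraMap_trace_eq_tr (hcard : Fintype.card K = 2 ^ h) (x : K) :
    algebraMap (ZMod 2) K (Algebra.trace (ZMod 2) K x) = Tr h x := by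
  have hrank : Module.finrank (ZMod 2) K = h := by
    have := Module.natCard_eq_pow_finrank (K := ZMod 2) (V := K)
    rw [Nat.card_eq_fintype_card, hcard, Nat.card_zmod] at this
    exact (Nat.pow_right_injective le_rfl this).symm
  simp [FiniteField.algebraMap_trace_eq_sum_pow, hrank, Tr]

theorem traceVec_eq_zero_iff (hcard : Fintype.card K = 2 ^ h) {a : ι → K} {x : K} :
    traceVec a x = 0 ↔ ∀ i, Tr h (a i * x) = 0 := by
  simp [funext_iff, traceVec_apply, ← algebraMap_trace_eq_tr hcard]

theorem traceVec_linearCombination_of_dual [Fintype ι] [DecidableEq ι]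
    (hcard : Fintype.card K = 2 ^ h) {a b : ι → K}
    (htr : ∀ i j, Tr h (a i * b j) = if i = j then 1 else 0) (w : ι → ZMod 2) :
    traceVec a (Fintype.linearCombination (ZMod 2) b w) = w := by
  have hdual (i j : ι) : Algebra.trace (ZMod 2) K (a i * b j) = if i = j then 1 else 0 :=
    (algebraMap (ZMod 2) K).injective (by simp [algebraMap_trace_eq_tr hcard, htr])
  ext i
  simp [traceVec_apply, Fintype.linearCombination_apply, Finset.mul_sum, hdual]

theorem q8Arc_eq_traceArc (hcard : Fintype.card K = 2 ^ h) {a b : Fin 3 → K}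
    (htr : ∀ i j, Tr h (a i * b j) = if i = j then 1 else 0) :
    q8Arc h a b = traceArc a q8Map := by
  refine congrArg₂ (· ∪ ·) (Set.ext fun P ↦ ?_) (Set.ext fun P ↦ ⟨?_, ?_⟩)
  · simp only [traceVec_eq_zero_iff hcard]
    rfl
  · rintro ⟨l, hl, s, hs, rfl⟩
    obtain ⟨v, rfl⟩ := forall_eq_zero_or_one_iff_exists_algebraMap.1 hl
    refine ⟨v, Fintype.linearCombination (ZMod 2) b (q8Map v) + s, ?_, affinePt_inj.2 ⟨?_, ?_⟩⟩
    · rw [map_add, traceVec_linearCombination_of_dual hcard htr,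
        (traceVec_eq_zero_iff hcard).2 hs, add_zero]
    · simp [linearCombination_fin_three]
    · simp [linearCombination_fin_three, q8Map]
  · rintro ⟨v, z, hz, rfl⟩
    refine ⟨algebraMap (ZMod 2) K ∘ v, forall_eq_zero_or_one_iff_exists_algebraMap.2 ⟨v, rfl⟩,
      z - Fintype.linearCombination (ZMod 2) b (q8Map v), (traceVec_eq_zero_iff hcard).1 ?_,
      affinePt_inj.2 ⟨?_, ?_⟩⟩
    · rw [map_sub, hz, traceVec_linearCombination_of_dual hcard htr, sub_self]
    · simp [linearCombination_fin_three]
    · simp [linearCombination_fin_three, q8Map]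

end F2Coordinates

/-- Theorem 4.4: the `q/8`-construction yields, for `q > 16`, an elation
KM-arc of type `q/8` with `q/8`-nucleus `(0:0:1)` and elation line `X = 0` (every set
`{z | (1:α:z) ∈ A}` is empty or a coset of `S`), and for `q = 16` a hyperoval stabilised
by a non-trivial elation with axis `X = 0`. -/
theorem q8_construction
    {K : Type*} [Field K] [Fintype K] (h : ℕ) (hh : 4 ≤ h)
    (hcard : Fintype.card K = 2 ^ h)
    (a b : Fin 3 → K) (hind : F2Indep a) (ha : ∀ i, a i ≠ 0) (hb : ∀ i, b i ≠ 0)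
    (htr : ∀ i j, Tr h (a i * b j) = if i = j then 1 else 0) :
    (16 < 2 ^ h →
      IsElationKMArc (2 ^ h) (2 ^ h / 8) (q8Arc h a b) (pt3 (0 : K) 0 1 (by simp))
        (lineX0 K) ∧
      ∀ α : K, {z : K | pt3 1 α z (by simp) ∈ q8Arc h a b} = ∅ ∨
        ∃ β : K, {z : K | pt3 1 α z (by simp) ∈ q8Arc h a b}
          = (fun s => β + s) '' {x : K | ∀ i, Tr h (a i * x) = 0}) ∧
    (2 ^ h = 16 →
      (q8Arc h a b).ncard = 18 ∧
      (∀ L : Submodule K (Fin 3 → K), IsLine L →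
        secantCount (q8Arc h a b) L = 0 ∨ secantCount (q8Arc h a b) L = 2) ∧
      ∃ f : (Fin 3 → K) ≃ₗ[K] (Fin 3 → K),
        IsElationAxis f (lineX0 K) ∧ Stabilises f (q8Arc h a b) ∧ projMap f ≠ id) := by
  have : CharP K 2 := charP_of_card_eq_prime_pow hcard
  let : Algebra (ZMod 2) K := ZMod.algebra K 2
  have hli : LinearIndependent (ZMod 2) a := hind.linearIndependent
  have hker : {x : K | ∀ i, Tr h (a i * x) = 0} = LinearMap.ker (traceVec a) :=
    Set.ext fun x ↦ (traceVec_eq_zero_iff hcard).symm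
  have hq : Nat.card K = 2 ^ h := by rw [Nat.card_eq_fintype_card, hcard]
  have hdvd : 8 ∣ Nat.card K := two_pow_card_dvd_natCard hli
  have hsec := secantCount_traceArc_q8Map_lineSlope hli
  have hKM : IsKMArc (Nat.card K) (Nat.card K / 8) (traceArc a q8Map) := isKMArc_traceArc hli hsec
  rw [q8Arc_eq_traceArc hcard htr, hker, ← hq]
  refine ⟨fun h16 ↦ ⟨isElationKMArc_traceArc hli hsec ?_,
    setOf_affinePt_mem_traceArc_eq_empty_or_coset hli q8Map⟩, fun h16 ↦ ?_⟩
  · change 2 < Nat.card K / 8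
    lia
  · rw [h16] at hKM
    refine ⟨hKM.1, fun L hL ↦ (hKM.2 L hL).imp_right (or_self_iff.1 ·),
      exists_stabilises_traceArc_projMap_ne_id hli ?_ q8Map⟩
    rw [h16]
    norm_num
end
end

section
/- Let q = 2^h with h ≥ 4, let α₁, α₂, α₃ ∈ F_q \ {0} be F_2-independent, let k ∈ F_q \ {0} and let φ be a field automorphism of F_q. Let A be a point set produced by the q/8-construction from (α₁, α₂, α₃) and let A' be one produced from (kφ(α₁), kφ(α₂), kφ(α₃)) (each with some admissible choice of the β's). Then A and A' are PΓL-equivalent: there exist a field automorphism ψ of F_q and M ∈ GL(3,q) such that the semilinear collineation of PG(2,q) sending the point spanned by (x,y,z) ∈ F_q³ to the point spanned by M·(ψ(x), ψ(y), ψ(z)) maps A onto A'. -/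
open scoped Classical

noncomputable section

variable {K : Type*} [Field K]

/-!
The semilinear map `(x, y, z) ↦ (φ x, k φ y, k⁻¹ φ z)` carries one construction to the other.
By duality of `b` with `a`, the third coordinates `z` of the affine points over `∑ lᵢ aᵢ` are
exactly those with `Tr (aᵢ z) = fᵢ(l)` for all `i`, so the arc does not depend on the choice of `b`.
In these trace conditions, and in those on the line `X = 0`, the scalars introduced by the map
cancel those of `k φ(aᵢ)`. Each trace is thereby only changed by `φ`, which fixes the prescribed
values since they are `0` or `1`.
-/

section Trace

lemma tr_add [CharP K 2] (h : ℕ) (x y : K) : Tr h (x + y) = Tr h x + Tr h y := by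
  simp_rw [Tr, add_pow_char_pow, Finset.sum_add_distrib]

lemma tr_sum [CharP K 2] {ι : Type*} (h : ℕ) (s : Finset ι) (f : ι → K) :
    Tr h (∑ i ∈ s, f i) = ∑ i ∈ s, Tr h (f i) := by
  simp_rw [Tr, sum_pow_char_pow]
  exact Finset.sum_comm

lemma tr_mul_of_eq_zero_or_one (h : ℕ) {c : K} (hc : c = 0 ∨ c = 1) (x : K) :
    Tr h (c * x) = c * Tr h x := by
  rcases hc with rfl | rfl <;> simp [Tr]

section Map

variable {L F : Type*} [Field L] [FunLike F K L] [RingHomClass F K L]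

lemma tr_map (h : ℕ) (φ : F) (x : K) : Tr h (φ x) = φ (Tr h x) := by
  simp [Tr]

lemma tr_mul_map_mul_inv_mul_map (h : ℕ) (φ : F) {k : L} (hk : k ≠ 0) (a x : K) :
    Tr h (k * φ a * (k⁻¹ * φ x)) = φ (Tr h (a * x)) := by
  rw [mul_mul_mul_comm, mul_inv_cancel₀ hk, one_mul, ← map_mul, tr_map]

end Map

section SelfMap

variable {F : Type*} [FunLike F K K] [RingHomClass F K K]

lemma map_eq_self_of_eq_zero_or_one (φ : F) {c : K} (hc : c = 0 ∨ c = 1) : φ c = c := by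
  rcases hc with rfl | rfl <;> simp

lemma tr_mul_map_mul_inv_mul_map_eq_iff (h : ℕ) (φ : F) {k : K} (hk : k ≠ 0) (a x : K)
    {c : K} (hc : c = 0 ∨ c = 1) :
    Tr h (k * φ a * (k⁻¹ * φ x)) = c ↔ Tr h (a * x) = c := by
  rw [tr_mul_map_mul_inv_mul_map h φ hk]
  exact (RingHomClass.toRingHom φ).injective.eq_iff' (map_eq_self_of_eq_zero_or_one φ hc)

end SelfMap

variable [CharP K 2] {ι : Type*} [Fintype ι] [DecidableEq ι] {h : ℕ} {a b c : ι → K}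

lemma tr_mul_sum_of_dual (htr : ∀ i j, Tr h (a i * b j) = if i = j then 1 else 0)
    (hc : ∀ i, c i = 0 ∨ c i = 1) (i : ι) : Tr h (a i * ∑ j, c j * b j) = c i := by
  simp_rw [Finset.mul_sum, mul_left_comm (a i), tr_sum, tr_mul_of_eq_zero_or_one h (hc _), htr]
  simp

lemma exists_eq_sum_add_iff_of_dual (htr : ∀ i j, Tr h (a i * b j) = if i = j then 1 else 0)
    (hc : ∀ i, c i = 0 ∨ c i = 1) (z : K) :
    (∃ s, (∀ i, Tr h (a i * s) = 0) ∧ z = ∑ j, c j * b j + s) ↔ ∀ i, Tr h (a i * z) = c i := by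
  constructor
  · rintro ⟨s, hs, rfl⟩ i
    rw [mul_add, tr_add, tr_mul_sum_of_dual htr hc, hs, add_zero]
  · refine fun hz => ⟨∑ j, c j * b j + z, fun i => ?_, ?_⟩
    · rw [mul_add, tr_add, tr_mul_sum_of_dual htr hc, hz, CharTwo.add_self_eq_zero]
    · rw [← add_assoc, CharTwo.add_self_eq_zero, zero_add]

end Trace

section Collineation

/-- The point `(0 : 1 : x)` of the line `X = 0`. -/
def infPt (x : K) : Pt K := pt3 0 1 x (by simp)

/-- The affine point `(1 : y : z)`, off the line `X = 0`, where `p = (y, z)`. -/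
def affPt (p : K × K) : Pt K := pt3 1 p.1 p.2 (by simp)

lemma frobMap_mk_eq_mk_of_smul_eq (ψ : K ≃+* K) (M : (Fin 3 → K) ≃ₗ[K] (Fin 3 → K))
    {v w : Fin 3 → K} (hv : v ≠ 0) (hw : w ≠ 0) {c : K} (hc : c • w = M fun i => ψ (v i)) :
    frobMap ψ M (Projectivization.mk K v hv) = Projectivization.mk K w hw := by
  obtain ⟨u, hu⟩ := Projectivization.exists_smul_eq_mk_rep K v hv
  rw [frobMap, Projectivization.mk_eq_mk_iff']
  refine ⟨ψ u * c, ?_⟩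
  rw [mul_smul, hc, ← map_smul, ← hu]
  congr 1
  ext i
  simp [Units.smul_def]

/-- The linear automorphism `diag(1, k, k⁻¹)` of `K³`. -/
def diagEquiv (k : K) (hk : k ≠ 0) : (Fin 3 → K) ≃ₗ[K] (Fin 3 → K) :=
  LinearEquiv.piCongrRight fun i =>
    LinearEquiv.smulOfNeZero K K ((![1, k, k⁻¹] : Fin 3 → K) i) (by fin_cases i <;> simp [hk])

lemma diagEquiv_apply {k : K} (hk : k ≠ 0) (v : Fin 3 → K) :
    diagEquiv k hk v = ![v 0, k * v 1, k⁻¹ * v 2] := by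
  ext i
  fin_cases i <;> simp [diagEquiv]

variable (φ : K ≃+* K) {k : K} (hk : k ≠ 0)

lemma frobMap_diagEquiv_infPt (x : K) :
    frobMap φ (diagEquiv k hk) (infPt x) = infPt ((k ^ 2)⁻¹ * φ x) := by
  refine frobMap_mk_eq_mk_of_smul_eq φ _ _ _ (c := k) ?_
  rw [diagEquiv_apply]
  ext i
  fin_cases i <;> simp [field]

lemma frobMap_diagEquiv_affPt (p : K × K) :
    frobMap φ (diagEquiv k hk) (affPt p) =
      affPt (Prod.map (fun y => k * φ y) (fun z => k⁻¹ * φ z) p) := by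
  refine frobMap_mk_eq_mk_of_smul_eq φ _ _ _ (c := 1) ?_
  rw [diagEquiv_apply]
  ext i
  fin_cases i <;> simp

end Collineation

section Arc

/-- The triple `(f₁, f₂, f₃)` of Boolean functions of the `q/8`-construction. -/
def q8Fun (l : Fin 3 → K) : Fin 3 → K :=
  ![l 0 + l 1 + l 2 + l 1 * l 2, l 1 + l 2 + l 0 * l 2, l 2 + l 0 * l 1]

lemma q8Fun_eq_zero_or_one [CharP K 2] {l : Fin 3 → K} (hl : ∀ i, l i = 0 ∨ l i = 1) (i : Fin 3) :
    q8Fun l i = 0 ∨ q8Fun l i = 1 := by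
  rcases hl 0 with h0 | h0 <;> rcases hl 1 with h1 | h1 <;> rcases hl 2 with h2 | h2 <;>
    fin_cases i <;> simp [q8Fun, h0, h1, h2, CharTwo.add_self_eq_zero]

/-- The coordinates of the points of the `q/8`-construction on the line `X = 0`. -/
def q8InfSet (h : ℕ) (a : Fin 3 → K) : Set K :=
  {x | ∀ i, Tr h (a i ^ 2 * x) = 0}

/-- The affine coordinates `(y, z)` of the points of the `q/8`-construction off the line `X = 0`,
with `z` described by its traces instead of by a family dual to `a`. -/
def q8AffSet (h : ℕ) (a : Fin 3 → K) : Set (K × K) :=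
  {p | ∃ l : Fin 3 → K, (∀ i, l i = 0 ∨ l i = 1) ∧ p.1 = ∑ i, l i * a i ∧
    ∀ i, Tr h (a i * p.2) = q8Fun l i}

lemma q8Arc_eq_image_union_image [CharP K 2] {h : ℕ} {a b : Fin 3 → K}
    (htr : ∀ i j, Tr h (a i * b j) = if i = j then 1 else 0) :
    q8Arc h a b = infPt '' q8InfSet h a ∪ affPt '' q8AffSet h a := by
  unfold q8Arc
  congr 1
  · ext P
    simp only [infPt, q8InfSet, Set.mem_image, Set.mem_ofPred_eq, eq_comm (a := P)]
  · ext P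
    constructor
    · rintro ⟨l, hl, s, hs, rfl⟩
      refine ⟨(_, _), ⟨l, hl, (Fin.sum_univ_three _).symm, ?_⟩, rfl⟩
      exact (exists_eq_sum_add_iff_of_dual htr (q8Fun_eq_zero_or_one hl) _).1
        ⟨s, hs, by rw [Fin.sum_univ_three]; rfl⟩
    · rintro ⟨⟨_, z⟩, ⟨l, hl, rfl, hz⟩, rfl⟩
      obtain ⟨s, hs, rfl⟩ :=
        (exists_eq_sum_add_iff_of_dual htr (q8Fun_eq_zero_or_one hl) z).2 hz
      refine ⟨l, hl, s, hs, ?_⟩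
      simp only [affPt, Fin.sum_univ_three]
      rfl

variable {k : K} (φ : K ≃+* K)

lemma mul_map_surjective (hk : k ≠ 0) : Function.Surjective fun x => k * φ x :=
  (mul_left_surjective₀ hk).comp φ.surjective

lemma image_q8InfSet (h : ℕ) (a : Fin 3 → K) (hk : k ≠ 0) :
    (fun x => (k ^ 2)⁻¹ * φ x) '' q8InfSet h a = q8InfSet h fun i => k * φ (a i) := by
  have hk2 : k ^ 2 ≠ 0 := pow_ne_zero 2 hk
  convert Set.image_preimage_eq _ (mul_map_surjective φ (inv_ne_zero hk2)) using 2
  ext x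
  simp only [q8InfSet, Set.mem_preimage, Set.mem_ofPred_eq, mul_pow, ← map_pow,
    tr_mul_map_mul_inv_mul_map_eq_iff h φ hk2 _ _ (Or.inl rfl)]

lemma image_q8AffSet [CharP K 2] (h : ℕ) (a : Fin 3 → K) (hk : k ≠ 0) :
    Prod.map (fun y => k * φ y) (fun z => k⁻¹ * φ z) '' q8AffSet h a =
      q8AffSet h fun i => k * φ (a i) := by
  convert Set.image_preimage_eq _
    ((mul_map_surjective φ hk).prodMap (mul_map_surjective φ (inv_ne_zero hk))) using 2
  ext ⟨y, z⟩
  refine exists_congr fun l => and_congr_right fun hl => and_congr ?_ <| forall_congr' fun i =>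
    (tr_mul_map_mul_inv_mul_map_eq_iff h φ hk _ _ (q8Fun_eq_zero_or_one hl i)).symm
  have map_sum_mul : k * φ (∑ i, l i * a i) = ∑ i, l i * (k * φ (a i)) := by
    simp_rw [map_sum, map_mul, map_eq_self_of_eq_zero_or_one φ (hl _), Finset.mul_sum,
      mul_left_comm k]
  simp only [Prod.map_fst, ← map_sum_mul, mul_right_inj' hk, φ.injective.eq_iff]

end Arc

theorem q8_pgammal_equiv_general [CharP K 2] (h : ℕ) (a b b' : Fin 3 → K) (k : K) (hk : k ≠ 0)
    (φ : K ≃+* K) (htr : ∀ i j, Tr h (a i * b j) = if i = j then 1 else 0)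
    (htr' : ∀ i j, Tr h ((k * φ (a i)) * b' j) = if i = j then 1 else 0) :
    frobMap φ (diagEquiv k hk) '' q8Arc h a b = q8Arc h (fun i => k * φ (a i)) b' := by
  rw [q8Arc_eq_image_union_image htr, q8Arc_eq_image_union_image htr', Set.image_union,
    Set.image_comm (frobMap_diagEquiv_infPt φ hk), Set.image_comm (frobMap_diagEquiv_affPt φ hk),
    image_q8InfSet φ h a hk, image_q8AffSet φ h a hk]

/-- Lemma 4.10: the `q/8`-constructions built from `(α₁,α₂,α₃)` and from
`(kφ(α₁), kφ(α₂), kφ(α₃))` are PΓL-equivalent. -/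
theorem q8_pgammal_equiv
    {K : Type*} [Field K] [Fintype K] (h : ℕ) (hh : 4 ≤ h)
    (hcard : Fintype.card K = 2 ^ h)
    (a b b' : Fin 3 → K) (k : K) (hk : k ≠ 0) (φ : K ≃+* K)
    (hind : F2Indep a) (ha : ∀ i, a i ≠ 0) (hb : ∀ i, b i ≠ 0)
    (htr : ∀ i j, Tr h (a i * b j) = if i = j then 1 else 0)
    (hind' : F2Indep fun i => k * φ (a i)) (hb' : ∀ i, b' i ≠ 0)
    (htr' : ∀ i j, Tr h ((k * φ (a i)) * b' j) = if i = j then 1 else 0) :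
    ∃ (ψ : K ≃+* K) (M : (Fin 3 → K) ≃ₗ[K] (Fin 3 → K)),
      frobMap ψ M '' q8Arc h a b = q8Arc h (fun i => k * φ (a i)) b' := by
  have : CharP K 2 := charP_of_card_eq_prime_pow hcard
  exact ⟨φ, diagEquiv k hk, q8_pgammal_equiv_general h a b b' k hk φ htr htr'⟩
end
end

section
/- Let q = 2^h and let α₁, α₂, α₃, α₄ ∈ F_q \ {0} be F_2-independent. If α_i²/α₄ ∈ ⟨α₁, α₂, α₃, α₄⟩ (the F_2-span) for i = 1, 2, 3, then there exists α ∈ ⟨α₁, α₂, α₃, α₄⟩ such that the set {α₁(α₁+α₄), α₂(α₂+α₄), α₃(α₃+α₄), α₄α} is F_2-independent. -/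
open scoped Classical

noncomputable section

variable {K : Type*} [Field K]

/-!
In characteristic two `x ↦ x * (x + b)` is additive with kernel `{0, b}`, so it preserves the
independence of any family whose span avoids `b`; with `b = α₄` this handles the first three
elements. They span an `F₂`-space of dimension 3, whereas `α₄α₁, …, α₄α₄` are four independent
elements, so one of the latter lies outside that span: `α` can even be chosen among the `αᵢ`.
-/

section LinearAlgebra

variable {F V : Type*} [DivisionRing F] [AddCommGroup V] [Module F V]

theorem exists_linearIndependent_snoc_of_lt_card {ι : Type*} [Fintype ι] {n : ℕ}
    {u : Fin n → V} {w : ι → V} (hu : LinearIndependent F u) (hw : LinearIndependent F w)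
    (hn : n < Fintype.card ι) :
    ∃ i, LinearIndependent F (Fin.snoc u (w i) : Fin (n + 1) → V) := by
  by_contra! hdep
  have hmem (i : ι) : w i ∈ Submodule.span F (Set.range u) := by
    by_contra hi
    exact hdep i (linearIndependent_finSnoc.2 ⟨hu, hi⟩)
  have hspan : Submodule.span F (Set.range w) ≤ Submodule.span F (Set.range u) :=
    Submodule.span_le.2 (Set.range_subset_iff.2 hmem)
  have := FiniteDimensional.span_of_finite F (Set.finite_range u)
  have hcard : Fintype.card ι ≤ n := calc
    Fintype.card ι = Module.finrank F (Submodule.span F (Set.range w)) :=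
      (finrank_span_eq_card hw).symm
    _ ≤ Module.finrank F (Submodule.span F (Set.range u)) := Submodule.finrank_mono hspan
    _ ≤ n := (finrank_range_le_card u).trans_eq (Fintype.card_fin n)
  exact hn.not_ge hcard

end LinearAlgebra

section MulAddMap

variable {R : Type*} [CommRing R] [Module (ZMod 2) R]

/-- The Artin–Schreier type map `x ↦ x * (x + b)`, which is `F₂`-linear in characteristic two. -/
def mulAddMap (b : R) : R →ₗ[ZMod 2] R :=
  AddMonoidHom.toZModLinearMap 2
    { toFun := fun x => x * (x + b)
      map_zero' := zero_mul _
      map_add' := fun x y => by linear_combination ZModModule.add_self (x * y) }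

theorem mulAddMap_apply (b x : R) : mulAddMap b x = x * (x + b) := rfl

theorem ker_mulAddMap [IsDomain R] (b : R) :
    LinearMap.ker (mulAddMap b) = Submodule.span (ZMod 2) {b} := by
  apply le_antisymm
  · intro x hx
    rw [LinearMap.mem_ker, mulAddMap_apply] at hx
    rcases mul_eq_zero.1 hx with rfl | hx
    · exact Submodule.zero_mem _
    · rw [eq_neg_of_add_eq_zero_left hx]
      exact Submodule.neg_mem _ (Submodule.mem_span_singleton_self b)
  · rw [Submodule.span_singleton_le_iff_mem, LinearMap.mem_ker, mulAddMap_apply,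
      ZModModule.add_self, mul_zero]

theorem linearIndependent_mul_add_of_notMem_span [IsDomain R] {ι : Type*} {v : ι → R} {b : R}
    (hv : LinearIndependent (ZMod 2) v) (hb : b ∉ Submodule.span (ZMod 2) (Set.range v)) :
    LinearIndependent (ZMod 2) fun i => v i * (v i + b) := by
  have hb0 : b ≠ 0 := fun h => hb (h ▸ Submodule.zero_mem _)
  refine hv.map (f := mulAddMap b) ?_
  rwa [ker_mulAddMap, Submodule.disjoint_span_singleton' hb0]

end MulAddMap

theorem exists_linearIndependent_snoc_mul_add_mul {R : Type*} [CommRing R] [IsDomain R]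
    [Algebra (ZMod 2) R] {n : ℕ} {a : Fin (n + 1) → R} (ha : LinearIndependent (ZMod 2) a) :
    ∃ i, LinearIndependent (ZMod 2)
      (Fin.snoc (fun j : Fin n => a j.castSucc * (a j.castSucc + a (Fin.last n)))
        (a (Fin.last n) * a i) : Fin (n + 1) → R) := by
  obtain ⟨hinit, hlast⟩ := linearIndependent_finSucc'.1 ha
  have hmul : LinearIndependent (ZMod 2) fun i => a (Fin.last n) * a i :=
    ha.map_injOn (LinearMap.mulLeft (ZMod 2) (a (Fin.last n)))
      (mul_right_injective₀ (ha.ne_zero _)).injOn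
  exact exists_linearIndependent_snoc_of_lt_card
    (linearIndependent_mul_add_of_notMem_span hinit hlast) hmul (by simp)

theorem mem_range_algebraMap_zmod_two {A : Type*} [Semiring A] [Algebra (ZMod 2) A] {x : A} :
    x ∈ Set.range (algebraMap (ZMod 2) A) ↔ x = 0 ∨ x = 1 := by
  constructor
  · rintro ⟨t, rfl⟩
    fin_cases t
    · exact Or.inl (map_zero _)
    · exact Or.inr (map_one _)
  · rintro (rfl | rfl)
    · exact ⟨0, map_zero _⟩
    · exact ⟨1, map_one _⟩

theorem f2Indep_iff_linearIndependent [Algebra (ZMod 2) K] {n : ℕ} {v : Fin n → K} :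
    F2Indep v ↔ LinearIndependent (ZMod 2) v := by
  simp only [F2Indep, Fintype.linearIndependent_iff, ← mem_range_algebraMap_zmod_two,
    Algebra.smul_def]
  constructor
  · intro hv g hg i
    exact (map_eq_zero _).1 (hv (fun j => algebraMap (ZMod 2) K (g j)) (fun j => ⟨g j, rfl⟩) hg i)
  · intro hv c hc hsum i
    choose g hg using hc
    simp only [← hg] at hsum ⊢
    rw [hv g hsum i, map_zero]

theorem mem_f2Span {n : ℕ} (v : Fin n → K) (i : Fin n) : v i ∈ F2Span v := by
  refine ⟨Pi.single i 1, fun j => ?_, ?_⟩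
  · by_cases hj : j = i <;> simp [hj]
  · simp [Pi.single_apply]

theorem q16_alpha_exists_general [CharP K 2] {n : ℕ} {a : Fin (n + 1) → K} (hind : F2Indep a) :
    ∃ i, F2Indep
      (Fin.snoc (fun j : Fin n => a j.castSucc * (a j.castSucc + a (Fin.last n)))
        (a (Fin.last n) * a i) : Fin (n + 1) → K) := by
  let := ZMod.algebra K 2
  simp only [f2Indep_iff_linearIndependent] at hind ⊢
  exact exists_linearIndependent_snoc_mul_add_mul hind

/-- Lemma 5.1: if `αᵢ²/α₄` lies in the `F₂`-span of `α₁,α₂,α₃,α₄` for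
`i = 1,2,3`, then some `α` in that span makes
`{α₁(α₁+α₄), α₂(α₂+α₄), α₃(α₃+α₄), α₄α}` an `F₂`-independent set. -/
theorem q16_alpha_exists
    {K : Type*} [Field K] [Fintype K] (h : ℕ)
    (hcard : Fintype.card K = 2 ^ h)
    (a : Fin 4 → K) (hind : F2Indep a) (ha : ∀ i, a i ≠ 0)
    (hsq1 : a 0 ^ 2 / a 3 ∈ F2Span a)
    (hsq2 : a 1 ^ 2 / a 3 ∈ F2Span a)
    (hsq3 : a 2 ^ 2 / a 3 ∈ F2Span a) :
    ∃ α ∈ F2Span a,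
      F2Indep ![a 0 * (a 0 + a 3), a 1 * (a 1 + a 3), a 2 * (a 2 + a 3), a 3 * α] := by
  have : CharP K 2 := charP_of_card_eq_prime_pow hcard
  obtain ⟨i, hi⟩ := q16_alpha_exists_general hind
  refine ⟨a i, mem_f2Span a i, ?_⟩
  convert hi using 1
  ext j
  fin_cases j <;> rfl
end
end
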